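/- arXiv:0804.1077 — 4 statements merged into one kernel-verified Lean document; each statement's English description precedes it below -/
import Mathlib

section
/- The assignment k ↦ K + L, k⁻¹ ↦ K̄ + L̄, e ↦ E, f ↦ F extends to a well-defined ℂ-algebra homomorphism Φ : U_q(sl₂) → U_{K,L,twist}, and Φ is injective; in particular U_{K,L,twist} contains U_q(sl₂) as a subalgebra. -/
/-!
The relations of `Utwist` make `P = K K̄` and `Q = L L̄` complementary orthogonal idempotents, so
the mixed products `K L̄`, `L K̄`, `K̄ L`, `L̄ K` vanish and `K + L` is invertible with inverse
`K̄ + L̄`; the remaining relations of `U_q(sl₂)` are sums of relations of `Utwist`. This gives `Φ`.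

For injectivity, `Utwist` maps to the `2 × 2` matrices over `U = U_q(sl₂)` by sending `K`, `L` to
`diag(k, 0)`, `diag(0, k)` (similarly for `K̄`, `L̄`) and `E`, `F` to the antidiagonal matrices with
both entries `e`, respectively `f` (`psi`). Under the composite `U → M₂(U)` every generator `x`, and
hence every element `x`, sends a constant vector `(u, u)` to `(x u, x u)`. Taking `u = 1` recovers
`x` from its image.
-/

noncomputable section

inductive G4 : Type | k | kb | e | f

abbrev FA4 : Type := FreeAlgebra ℂ G4

def Yk : FA4 := FreeAlgebra.ι ℂ G4.k
def Ykb : FA4 := FreeAlgebra.ι ℂ G4.kb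
def Ye : FA4 := FreeAlgebra.ι ℂ G4.e
def Yf : FA4 := FreeAlgebra.ι ℂ G4.f

/-- Relations of the quantum enveloping algebra `U_q(sl₂)`. -/
inductive relSl2 (q : ℂ) : FA4 → FA4 → Prop
  | kkb : relSl2 q (Yk * Ykb) 1
  | kbk : relSl2 q (Ykb * Yk) 1
  | ke : relSl2 q (Yk * Ye) (q ^ 2 • (Ye * Yk))
  | kf : relSl2 q (Yk * Yf) ((q ^ 2)⁻¹ • (Yf * Yk))
  | ef : relSl2 q (Ye * Yf - Yf * Ye) ((q - q⁻¹)⁻¹ • (Yk - Ykb))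

/-- The quantum enveloping algebra `U_q(sl₂)`. -/
abbrev Uqsl2 (q : ℂ) : Type := RingQuot (relSl2 q)

def sk (q : ℂ) : Uqsl2 q := RingQuot.mkAlgHom ℂ (relSl2 q) Yk
def skb (q : ℂ) : Uqsl2 q := RingQuot.mkAlgHom ℂ (relSl2 q) Ykb
def se (q : ℂ) : Uqsl2 q := RingQuot.mkAlgHom ℂ (relSl2 q) Ye
def sf (q : ℂ) : Uqsl2 q := RingQuot.mkAlgHom ℂ (relSl2 q) Yf

inductive G6 : Type | K | Kb | L | Lb | E | F

abbrev FA6 : Type := FreeAlgebra ℂ G6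

def XK : FA6 := FreeAlgebra.ι ℂ G6.K
def XKb : FA6 := FreeAlgebra.ι ℂ G6.Kb
def XL : FA6 := FreeAlgebra.ι ℂ G6.L
def XLb : FA6 := FreeAlgebra.ι ℂ G6.Lb
def XE : FA6 := FreeAlgebra.ι ℂ G6.E
def XF : FA6 := FreeAlgebra.ι ℂ G6.F

/-- Relations of `U_{K,L,twist}`. -/
inductive relTwist (q : ℂ) : FA6 → FA6 → Prop
  | kkk : relTwist q (XK * XKb * XK) XK
  | kbk : relTwist q (XKb * XK * XKb) XKb
  | kc : relTwist q (XK * XKb) (XKb * XK)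
  | lll : relTwist q (XL * XLb * XL) XL
  | lbl : relTwist q (XLb * XL * XLb) XLb
  | lc : relTwist q (XL * XLb) (XLb * XL)
  | pq : relTwist q (XK * XKb + XL * XLb) 1
  | ke : relTwist q (XK * XE) (q ^ 2 • (XE * XL))
  | le : relTwist q (XL * XE) (q ^ 2 • (XE * XK))
  | kbe : relTwist q (XKb * XE) ((q ^ 2)⁻¹ • (XE * XLb))
  | lbe : relTwist q (XLb * XE) ((q ^ 2)⁻¹ • (XE * XKb))
  | kf : relTwist q (XK * XF) ((q ^ 2)⁻¹ • (XF * XL))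
  | lf : relTwist q (XL * XF) ((q ^ 2)⁻¹ • (XF * XK))
  | kbf : relTwist q (XKb * XF) (q ^ 2 • (XF * XLb))
  | lbf : relTwist q (XLb * XF) (q ^ 2 • (XF * XKb))
  | ef : relTwist q (XE * XF - XF * XE)
      ((q - q⁻¹)⁻¹ • ((XK + XL) - (XKb + XLb)))

/-- The algebra `U_{K,L,twist}`. -/
abbrev Utwist (q : ℂ) : Type := RingQuot (relTwist q)

def tK (q : ℂ) : Utwist q := RingQuot.mkAlgHom ℂ (relTwist q) XK
def tKb (q : ℂ) : Utwist q := RingQuot.mkAlgHom ℂ (relTwist q) XKb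
def tL (q : ℂ) : Utwist q := RingQuot.mkAlgHom ℂ (relTwist q) XL
def tLb (q : ℂ) : Utwist q := RingQuot.mkAlgHom ℂ (relTwist q) XLb
def tE (q : ℂ) : Utwist q := RingQuot.mkAlgHom ℂ (relTwist q) XE
def tF (q : ℂ) : Utwist q := RingQuot.mkAlgHom ℂ (relTwist q) XF
def tP (q : ℂ) : Utwist q := tK q * tKb q
def tQ (q : ℂ) : Utwist q := tL q * tLb q

section Sl2

variable (q : ℂ)

lemma sk_mul_skb : sk q * skb q = 1 := by
  simpa [sk, skb] using RingQuot.mkAlgHom_rel ℂ (relSl2.kkb (q := q))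

lemma skb_mul_sk : skb q * sk q = 1 := by
  simpa [sk, skb] using RingQuot.mkAlgHom_rel ℂ (relSl2.kbk (q := q))

lemma sk_mul_se : sk q * se q = q ^ 2 • (se q * sk q) := by
  simpa [sk, se] using RingQuot.mkAlgHom_rel ℂ (relSl2.ke (q := q))

lemma sk_mul_sf : sk q * sf q = (q ^ 2)⁻¹ • (sf q * sk q) := by
  simpa [sk, sf] using RingQuot.mkAlgHom_rel ℂ (relSl2.kf (q := q))

lemma se_mul_sf : se q * sf q - sf q * se q = (q - q⁻¹)⁻¹ • (sk q - skb q) := by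
  simpa [sk, skb, se, sf] using RingQuot.mkAlgHom_rel ℂ (relSl2.ef (q := q))

/-- Conjugating a `q`-commutation relation by an inverse inverts the scalar. -/
lemma inv_mul_of_mul_eq_smul {A : Type*} [Ring A] [Algebra ℂ A] {k kb x : A} {c : ℂ} (hc : c ≠ 0)
    (h₁ : k * kb = 1) (h₂ : kb * k = 1) (h : k * x = c • (x * k)) :
    kb * x = c⁻¹ • (x * kb) := by
  have h3 : x * kb = c • (kb * x) := by
    calc x * kb = kb * (k * x) * kb := by rw [← mul_assoc, h₂, one_mul]
      _ = c • (kb * x * (k * kb)) := by rw [h]; simp [mul_assoc]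
      _ = c • (kb * x) := by rw [h₁, mul_one]
  rw [h3, smul_smul, inv_mul_cancel₀ hc, one_smul]

lemma skb_mul_se (hq : q ≠ 0) : skb q * se q = (q ^ 2)⁻¹ • (se q * skb q) :=
  inv_mul_of_mul_eq_smul (pow_ne_zero 2 hq) (sk_mul_skb q) (skb_mul_sk q) (sk_mul_se q)

lemma skb_mul_sf (hq : q ≠ 0) : skb q * sf q = q ^ 2 • (sf q * skb q) := by
  simpa using inv_mul_of_mul_eq_smul (inv_ne_zero (pow_ne_zero 2 hq))
    (sk_mul_skb q) (skb_mul_sk q) (sk_mul_sf q)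

end Sl2

/-- If `a`, `b` have commuting generalized inverses `a'`, `b'` with `a a' + b b' = 1`, then
`a b' = 0`, because the idempotents `a a'` and `b b'` are orthogonal. -/
lemma mul_eq_zero_of_complementary {A : Type*} [Ring A] {a a' b b' : A}
    (h₁ : a * a' * a = a) (hc : a * a' = a' * a)
    (h₂ : b' * b * b' = b') (hc' : b * b' = b' * b) (h : a * a' + b * b' = 1) :
    a * b' = 0 := by
  have hQ : b * b' = 1 - a * a' := eq_sub_of_add_eq' h
  calc a * b' = a * ((b' * b) * b') := by rw [h₂]
    _ = (a - a * (a * a')) * b' := by rw [← hc', hQ]; noncomm_ring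
    _ = 0 := by rw [hc, ← mul_assoc, h₁, sub_self, zero_mul]

section Twist

variable (q : ℂ)

lemma tK_tKb_tK : tK q * tKb q * tK q = tK q := by
  simpa [tK, tKb] using RingQuot.mkAlgHom_rel ℂ (relTwist.kkk (q := q))

lemma tKb_tK_tKb : tKb q * tK q * tKb q = tKb q := by
  simpa [tK, tKb] using RingQuot.mkAlgHom_rel ℂ (relTwist.kbk (q := q))

lemma tK_tKb : tK q * tKb q = tKb q * tK q := by
  simpa [tK, tKb] using RingQuot.mkAlgHom_rel ℂ (relTwist.kc (q := q))

lemma tL_tLb_tL : tL q * tLb q * tL q = tL q := by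
  simpa [tL, tLb] using RingQuot.mkAlgHom_rel ℂ (relTwist.lll (q := q))

lemma tLb_tL_tLb : tLb q * tL q * tLb q = tLb q := by
  simpa [tL, tLb] using RingQuot.mkAlgHom_rel ℂ (relTwist.lbl (q := q))

lemma tL_tLb : tL q * tLb q = tLb q * tL q := by
  simpa [tL, tLb] using RingQuot.mkAlgHom_rel ℂ (relTwist.lc (q := q))

lemma tP_add_tQ : tK q * tKb q + tL q * tLb q = 1 := by
  simpa [tK, tKb, tL, tLb] using RingQuot.mkAlgHom_rel ℂ (relTwist.pq (q := q))

lemma tK_tE : tK q * tE q = q ^ 2 • (tE q * tL q) := by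
  simpa [tK, tL, tE] using RingQuot.mkAlgHom_rel ℂ (relTwist.ke (q := q))

lemma tL_tE : tL q * tE q = q ^ 2 • (tE q * tK q) := by
  simpa [tK, tL, tE] using RingQuot.mkAlgHom_rel ℂ (relTwist.le (q := q))

lemma tK_tF : tK q * tF q = (q ^ 2)⁻¹ • (tF q * tL q) := by
  simpa [tK, tL, tF] using RingQuot.mkAlgHom_rel ℂ (relTwist.kf (q := q))

lemma tL_tF : tL q * tF q = (q ^ 2)⁻¹ • (tF q * tK q) := by
  simpa [tK, tL, tF] using RingQuot.mkAlgHom_rel ℂ (relTwist.lf (q := q))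

lemma tE_tF : tE q * tF q - tF q * tE q =
    (q - q⁻¹)⁻¹ • ((tK q + tL q) - (tKb q + tLb q)) := by
  simpa [tK, tL, tKb, tLb, tE, tF] using RingQuot.mkAlgHom_rel ℂ (relTwist.ef (q := q))

lemma tK_add_tL_mul : (tK q + tL q) * (tKb q + tLb q) = 1 := by
  have h₁ : tK q * tLb q = 0 := mul_eq_zero_of_complementary (tK_tKb_tK q) (tK_tKb q)
    (tLb_tL_tLb q) (tL_tLb q) (tP_add_tQ q)
  have h₂ : tL q * tKb q = 0 := mul_eq_zero_of_complementary (tL_tLb_tL q) (tL_tLb q)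
    (tKb_tK_tKb q) (tK_tKb q) ((add_comm _ _).trans (tP_add_tQ q))
  simp [mul_add, add_mul, h₁, h₂, tP_add_tQ]

lemma mul_tK_add_tL : (tKb q + tLb q) * (tK q + tL q) = 1 := by
  have hpq : tKb q * tK q + tLb q * tL q = 1 := by
    rw [← tK_tKb, ← tL_tLb, tP_add_tQ]
  have h₁ : tKb q * tL q = 0 := mul_eq_zero_of_complementary (tKb_tK_tKb q) (tK_tKb q).symm
    (tL_tLb_tL q) (tL_tLb q).symm hpq
  have h₂ : tLb q * tK q = 0 := mul_eq_zero_of_complementary (tLb_tL_tLb q) (tL_tLb q).symm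
    (tK_tKb_tK q) (tK_tKb q).symm ((add_comm _ _).trans hpq)
  simp [mul_add, add_mul, h₁, h₂, hpq]

end Twist

/-- The images in `Utwist q` of the generators of `U_q(sl₂)`. -/
def phiGen (q : ℂ) : G4 → Utwist q
  | .k => tK q + tL q
  | .kb => tKb q + tLb q
  | .e => tE q
  | .f => tF q

/-- The homomorphism `Φ : U_q(sl₂) → U_{K,L,twist}`. -/
def phi (q : ℂ) : Uqsl2 q →ₐ[ℂ] Utwist q :=
  RingQuot.liftAlgHom ℂ ⟨FreeAlgebra.lift ℂ (phiGen q), by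
    intro x y h
    cases h with
    | kkb => simpa [Yk, Ykb, phiGen] using tK_add_tL_mul q
    | kbk => simpa [Yk, Ykb, phiGen] using mul_tK_add_tL q
    | ke => simp [Yk, Ye, phiGen, add_mul, mul_add, tK_tE, tL_tE, add_comm]
    | kf => simp [Yk, Yf, phiGen, add_mul, mul_add, tK_tF, tL_tF, add_comm]
    | ef => simpa [Yk, Ykb, Ye, Yf, phiGen] using tE_tF q⟩

lemma phi_sk (q : ℂ) : phi q (sk q) = tK q + tL q := by simp [phi, sk, Yk, phiGen]

lemma phi_skb (q : ℂ) : phi q (skb q) = tKb q + tLb q := by simp [phi, skb, Ykb, phiGen]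

lemma phi_se (q : ℂ) : phi q (se q) = tE q := by simp [phi, se, Ye, phiGen]

lemma phi_sf (q : ℂ) : phi q (sf q) = tF q := by simp [phi, sf, Yf, phiGen]

/-- The images in `M₂(U_q(sl₂))` of the generators of `Utwist q`. -/
def psiGen (q : ℂ) : G6 → Matrix (Fin 2) (Fin 2) (Uqsl2 q)
  | .K => !![sk q, 0; 0, 0]
  | .Kb => !![skb q, 0; 0, 0]
  | .L => !![0, 0; 0, sk q]
  | .Lb => !![0, 0; 0, skb q]
  | .E => !![0, se q; se q, 0]
  | .F => !![0, sf q; sf q, 0]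

/-- The representation of `U_{K,L,twist}` by `2 × 2` matrices over `U_q(sl₂)`. -/
def psi (q : ℂ) (hq : q ≠ 0) : Utwist q →ₐ[ℂ] Matrix (Fin 2) (Fin 2) (Uqsl2 q) :=
  RingQuot.liftAlgHom ℂ ⟨FreeAlgebra.lift ℂ (psiGen q), by
    intro x y h
    cases h <;> ext i j <;> fin_cases i <;> fin_cases j <;>
      simp [XK, XKb, XL, XLb, XE, XF, psiGen, sk_mul_skb, skb_mul_sk, sk_mul_se, sk_mul_sf,
        skb_mul_se q hq, skb_mul_sf q hq, se_mul_sf]⟩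

/-- On constant vectors, `psi ∘ phi` is left multiplication. -/
lemma psi_phi_mulVec (q : ℂ) (hq : q ≠ 0) (x u : Uqsl2 q) :
    (psi q hq (phi q x)).mulVec (fun _ => u) = fun _ => x * u := by
  obtain ⟨y, rfl⟩ := RingQuot.mkAlgHom_surjective ℂ (relSl2 q) x
  induction y using FreeAlgebra.induction generalizing u with
  | grade0 r =>
    rw [AlgHom.commutes, AlgHom.commutes, AlgHom.commutes, Algebra.algebraMap_eq_smul_one,
      Algebra.algebraMap_eq_smul_one, Matrix.smul_mulVec, Matrix.one_mulVec]
    ext i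
    simp
  | grade1 g =>
    cases g with
    | k =>
      change (psi q hq (phi q (sk q))).mulVec _ = fun _ => sk q * u
      rw [phi_sk]
      ext i
      fin_cases i <;> simp [psi, tK, tL, XK, XL, psiGen, Matrix.mulVec, dotProduct]
    | kb =>
      change (psi q hq (phi q (skb q))).mulVec _ = fun _ => skb q * u
      rw [phi_skb]
      ext i
      fin_cases i <;> simp [psi, tKb, tLb, XKb, XLb, psiGen, Matrix.mulVec, dotProduct]
    | e =>
      change (psi q hq (phi q (se q))).mulVec _ = fun _ => se q * u
      rw [phi_se]
      ext i
      fin_cases i <;> simp [psi, tE, XE, psiGen, Matrix.mulVec, dotProduct]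
    | f =>
      change (psi q hq (phi q (sf q))).mulVec _ = fun _ => sf q * u
      rw [phi_sf]
      ext i
      fin_cases i <;> simp [psi, tF, XF, psiGen, Matrix.mulVec, dotProduct]
  | mul a b ha hb =>
    rw [map_mul, map_mul, map_mul, ← Matrix.mulVec_mulVec, hb, ha]
    simp only [mul_assoc]
  | add a b ha hb =>
    rw [map_add, map_add, map_add, Matrix.add_mulVec, ha, hb]
    ext i
    simp only [Pi.add_apply, add_mul]

/-- The assignment `k ↦ K + L`, `k⁻¹ ↦ K̄ + L̄`, `e ↦ E`, `f ↦ F` extends to a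
well-defined algebra homomorphism `Φ : U_q(sl₂) → U_{K,L,twist}`, and `Φ` is injective. -/
theorem statement6 (q : ℂ) (hq0 : q ≠ 0) (hq1 : q ≠ 1) (hqm1 : q ≠ -1) :
    ∃ Φ : Uqsl2 q →ₐ[ℂ] Utwist q,
      Φ (sk q) = tK q + tL q ∧ Φ (skb q) = tKb q + tLb q ∧
      Φ (se q) = tE q ∧ Φ (sf q) = tF q ∧
      Function.Injective Φ := by
  refine ⟨phi q, phi_sk q, phi_skb q, phi_se q, phi_sf q, fun x y hxy => ?_⟩
  have hx := congrFun (psi_phi_mulVec q hq0 x 1) 0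
  have hy := congrFun (psi_phi_mulVec q hq0 y 1) 0
  rw [hxy] at hx
  simpa using hx.symm.trans hy
end
end

section
/- The family of monomials {P Kⁱ Eʲ Fᵏ : i, j, k ≥ 0} ∪ {K̄ⁱ Eʲ Fᵏ : i ≥ 1, j, k ≥ 0} ∪ {Q Lⁱ Eʲ Fᵏ : i, j, k ≥ 0} ∪ {L̄ⁱ Eʲ Fᵏ : i ≥ 1, j, k ≥ 0} is a basis of U_{K,L,norm} as a ℂ-vector space. -/
/-!
The elements `P` and `Q = 1 - P` are complementary central idempotents, so the algebra is a product
of two copies of `U_q(sl₂)`, and the claimed family consists of the PBW monomials `Kᶻ Eʲ Fᵏ`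
(`z : ℤ`) of the first copy together with those of the second. The two halves `P Kⁱ`, `K̄ⁱ⁺¹` of the
torus part are merged into a single family `torus K K̄ z` indexed by `z : ℤ`, and the whole family is
reindexed by `Bool × ℤ × ℕ × ℕ` as `pbw`.

*Spanning.* The span of `pbw` contains `1 = P + Q` and is stable under left multiplication by the
generators. Only `F` needs work: `F · (E m) = E · (F m) - [E, F] m` gives an induction on the
exponent of `E` (`F_mul_pbw_mem`).

*Independence.* The left regular representation is written down explicitly on the free module on
`Bool × ℤ × ℕ × ℕ`; in it
`F Eʲ = Eʲ F - c (aⱼ K - bⱼ K⁻¹) Eʲ⁻¹` with `aⱼ₊₁ = 1 + q⁻² aⱼ`, `bⱼ₊₁ = 1 + q² bⱼ`.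
Each PBW monomial sends the sum of the two vacuum vectors to its own basis vector (`pbw_apply`), so
the monomials are independent.
-/

noncomputable section

/-- Relations of `U_{K,L,norm}`. -/
inductive relNorm (q : ℂ) : FA6 → FA6 → Prop
  | kkk : relNorm q (XK * XKb * XK) XK
  | kbk : relNorm q (XKb * XK * XKb) XKb
  | kc : relNorm q (XK * XKb) (XKb * XK)
  | lll : relNorm q (XL * XLb * XL) XL
  | lbl : relNorm q (XLb * XL * XLb) XLb
  | lc : relNorm q (XL * XLb) (XLb * XL)
  | pq : relNorm q (XK * XKb + XL * XLb) 1
  | ke : relNorm q (XK * XE) (q ^ 2 • (XE * XK))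
  | le : relNorm q (XL * XE) (q ^ 2 • (XE * XL))
  | kbe : relNorm q (XKb * XE) ((q ^ 2)⁻¹ • (XE * XKb))
  | lbe : relNorm q (XLb * XE) ((q ^ 2)⁻¹ • (XE * XLb))
  | kf : relNorm q (XK * XF) ((q ^ 2)⁻¹ • (XF * XK))
  | lf : relNorm q (XL * XF) ((q ^ 2)⁻¹ • (XF * XL))
  | kbf : relNorm q (XKb * XF) (q ^ 2 • (XF * XKb))
  | lbf : relNorm q (XLb * XF) (q ^ 2 • (XF * XLb))
  | ef : relNorm q (XE * XF - XF * XE)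
      ((q - q⁻¹)⁻¹ • ((XK + XL) - (XKb + XLb)))

/-- The algebra `U_{K,L,norm}`. -/
abbrev Unorm (q : ℂ) : Type := RingQuot (relNorm q)

def nK (q : ℂ) : Unorm q := RingQuot.mkAlgHom ℂ (relNorm q) XK
def nKb (q : ℂ) : Unorm q := RingQuot.mkAlgHom ℂ (relNorm q) XKb
def nL (q : ℂ) : Unorm q := RingQuot.mkAlgHom ℂ (relNorm q) XL
def nLb (q : ℂ) : Unorm q := RingQuot.mkAlgHom ℂ (relNorm q) XLb
def nE (q : ℂ) : Unorm q := RingQuot.mkAlgHom ℂ (relNorm q) XE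
def nF (q : ℂ) : Unorm q := RingQuot.mkAlgHom ℂ (relNorm q) XF
def nP (q : ℂ) : Unorm q := nK q * nKb q
def nQ (q : ℂ) : Unorm q := nL q * nLb q

/-- The PBW-type family of monomials
`{P Kⁱ Eʲ Fᵏ} ∪ {K̄^{i+1} Eʲ Fᵏ} ∪ {Q Lⁱ Eʲ Fᵏ} ∪ {L̄^{i+1} Eʲ Fᵏ}`. -/
def normMono (q : ℂ) :
    (ℕ × ℕ × ℕ) ⊕ (ℕ × ℕ × ℕ) ⊕ (ℕ × ℕ × ℕ) ⊕ (ℕ × ℕ × ℕ) → Unorm q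
  | .inl (i, j, k) => nP q * nK q ^ i * nE q ^ j * nF q ^ k
  | .inr (.inl (i, j, k)) => nKb q ^ (i + 1) * nE q ^ j * nF q ^ k
  | .inr (.inr (.inl (i, j, k))) => nQ q * nL q ^ i * nE q ^ j * nF q ^ k
  | .inr (.inr (.inr (i, j, k))) => nLb q ^ (i + 1) * nE q ^ j * nF q ^ k

/-! ### The torus part -/

/-- Integer powers of `x`, when `y` is an inverse of `x` relative to the idempotent `x * y`;
the zeroth power is `x * y`. -/
def torus {R : Type*} [Ring R] (x y : R) : ℤ → R
  | .ofNat n => x * y * x ^ n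
  | .negSucc n => y ^ (n + 1)

section Torus

variable {R : Type*} [Ring R] {x y : R}

lemma mul_torus (hy : y * x * y = y) (hc : x * y = y * x) (z : ℤ) :
    x * torus x y z = torus x y (z + 1) := by
  rcases z with n | n
  · change x * (x * y * x ^ n) = x * y * x ^ (n + 1)
    rw [pow_succ', hc]
    simp only [← mul_assoc, hc]
  · rcases n with _ | n
    · change x * y ^ (0 + 1) = x * y * x ^ 0
      simp
    · change x * y ^ (n + 1 + 1) = y ^ (n + 1)
      rw [pow_succ', pow_succ', ← mul_assoc, ← mul_assoc, hc, hy]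

lemma mul_torus' (hy : y * x * y = y) (hc : x * y = y * x) (z : ℤ) :
    y * torus x y z = torus x y (z - 1) := by
  rcases z with n | n
  · rcases n with _ | n
    · change y * (x * y * x ^ 0) = y ^ (0 + 1)
      simp [← mul_assoc, hy]
    · have : (Int.ofNat (n + 1) - 1) = Int.ofNat n := by simp
      rw [this]
      change y * (x * y * x ^ (n + 1)) = x * y * x ^ n
      rw [pow_succ', ← mul_assoc, ← mul_assoc, ← mul_assoc, hy, hc]
  · change y * y ^ (n + 1) = y ^ (n + 1 + 1)
    rw [← pow_succ']

lemma idem_mul_torus (hy : y * x * y = y) (hc : x * y = y * x) (z : ℤ) :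
    x * y * torus x y z = torus x y z := by
  rw [mul_assoc, mul_torus' hy hc, mul_torus hy hc, sub_add_cancel]

end Torus

/-- `e` and `t` commute up to a nonzero scalar. -/
def QComm {R : Type*} [Ring R] [Algebra ℂ R] (e t : R) : Prop :=
  ∃ c : ℂ, c ≠ 0 ∧ e * t = c • (t * e)

section QComm

variable {R : Type*} [Ring R] [Algebra ℂ R] {e t u : R}

lemma QComm.symm (h : QComm e t) : QComm t e := by
  obtain ⟨c, hc, h⟩ := h
  exact ⟨c⁻¹, inv_ne_zero hc, by rw [h, smul_smul, inv_mul_cancel₀ hc, one_smul]⟩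

lemma QComm.mul (h : QComm e t) (h' : QComm e u) : QComm e (t * u) := by
  obtain ⟨c, hc, h⟩ := h
  obtain ⟨d, hd, h'⟩ := h'
  refine ⟨c * d, mul_ne_zero hc hd, ?_⟩
  rw [← mul_assoc, h, smul_mul_assoc, mul_assoc, h', mul_smul_comm, smul_smul, mul_assoc]

lemma QComm.pow (h : QComm e t) (n : ℕ) : QComm e (t ^ n) := by
  induction n with
  | zero => exact ⟨1, one_ne_zero, by simp⟩
  | succ n ih => rw [pow_succ]; exact ih.mul h

lemma QComm.torus (h : QComm e t) (h' : QComm e u) (z : ℤ) : QComm e (torus t u z) := by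
  rcases z with n | n
  · exact (h.mul h').mul (h.pow n)
  · exact h'.pow (n + 1)

end QComm

/-! ### The defining relations in the quotient -/

section Relations

variable (q : ℂ)

lemma u_kkk : nK q * nKb q * nK q = nK q := by
  simpa [nK, nKb] using RingQuot.mkAlgHom_rel ℂ (relNorm.kkk (q := q))
lemma u_kbk : nKb q * nK q * nKb q = nKb q := by
  simpa [nK, nKb] using RingQuot.mkAlgHom_rel ℂ (relNorm.kbk (q := q))
lemma u_kc : nK q * nKb q = nKb q * nK q := by
  simpa [nK, nKb] using RingQuot.mkAlgHom_rel ℂ (relNorm.kc (q := q))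
lemma u_lll : nL q * nLb q * nL q = nL q := by
  simpa [nL, nLb] using RingQuot.mkAlgHom_rel ℂ (relNorm.lll (q := q))
lemma u_lbl : nLb q * nL q * nLb q = nLb q := by
  simpa [nL, nLb] using RingQuot.mkAlgHom_rel ℂ (relNorm.lbl (q := q))
lemma u_lc : nL q * nLb q = nLb q * nL q := by
  simpa [nL, nLb] using RingQuot.mkAlgHom_rel ℂ (relNorm.lc (q := q))
lemma u_pq : nK q * nKb q + nL q * nLb q = 1 := by
  simpa [nK, nKb, nL, nLb] using RingQuot.mkAlgHom_rel ℂ (relNorm.pq (q := q))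
lemma u_ke (hq : q ≠ 0) : QComm (nK q) (nE q) :=
  ⟨q ^ 2, by simp [hq], by
    simpa [nK, nE] using RingQuot.mkAlgHom_rel ℂ (relNorm.ke (q := q))⟩
lemma u_le (hq : q ≠ 0) : QComm (nL q) (nE q) :=
  ⟨q ^ 2, by simp [hq], by
    simpa [nL, nE] using RingQuot.mkAlgHom_rel ℂ (relNorm.le (q := q))⟩
lemma u_kbe (hq : q ≠ 0) : QComm (nKb q) (nE q) :=
  ⟨(q ^ 2)⁻¹, by simp [hq], by
    simpa [nKb, nE] using RingQuot.mkAlgHom_rel ℂ (relNorm.kbe (q := q))⟩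
lemma u_lbe (hq : q ≠ 0) : QComm (nLb q) (nE q) :=
  ⟨(q ^ 2)⁻¹, by simp [hq], by
    simpa [nLb, nE] using RingQuot.mkAlgHom_rel ℂ (relNorm.lbe (q := q))⟩
lemma u_kf (hq : q ≠ 0) : QComm (nK q) (nF q) :=
  ⟨(q ^ 2)⁻¹, by simp [hq], by
    simpa [nK, nF] using RingQuot.mkAlgHom_rel ℂ (relNorm.kf (q := q))⟩
lemma u_lf (hq : q ≠ 0) : QComm (nL q) (nF q) :=
  ⟨(q ^ 2)⁻¹, by simp [hq], by
    simpa [nL, nF] using RingQuot.mkAlgHom_rel ℂ (relNorm.lf (q := q))⟩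
lemma u_kbf (hq : q ≠ 0) : QComm (nKb q) (nF q) :=
  ⟨q ^ 2, by simp [hq], by
    simpa [nKb, nF] using RingQuot.mkAlgHom_rel ℂ (relNorm.kbf (q := q))⟩
lemma u_lbf (hq : q ≠ 0) : QComm (nLb q) (nF q) :=
  ⟨q ^ 2, by simp [hq], by
    simpa [nLb, nF] using RingQuot.mkAlgHom_rel ℂ (relNorm.lbf (q := q))⟩
lemma u_ef : nE q * nF q - nF q * nE q =
    (q - q⁻¹)⁻¹ • ((nK q + nL q) - (nKb q + nLb q)) := by
  simpa only [nK, nKb, nL, nLb, nE, nF, map_sub, map_mul, map_add, map_smul] using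
    RingQuot.mkAlgHom_rel ℂ (relNorm.ef (q := q))

end Relations

/-- If `x * y` and `u * v` are complementary idempotents, then the torus generated by `u, v` is
killed by `x` and `y`. -/
lemma mul_torus_eq_zero {R : Type*} [Ring R] {x y u v : R}
    (hx : x * y * x = x) (hy : y * x * y = y) (hc : x * y = y * x)
    (hv : v * u * v = v) (hd : u * v = v * u)
    (h1 : x * y + u * v = 1) (z : ℤ) :
    x * torus u v z = 0 ∧ y * torus u v z = 0 := by
  have huv : u * v = 1 - x * y := eq_sub_of_add_eq' h1
  have hxu : x * (u * v) = 0 := by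
    rw [huv, mul_sub, mul_one, hc, ← mul_assoc, hx, sub_self]
  have hyu : y * (u * v) = 0 := by
    rw [huv, mul_sub, mul_one, ← mul_assoc, hy, sub_self]
  rw [← idem_mul_torus hv hd, ← mul_assoc, ← mul_assoc y, hxu, hyu]
  simp

/-! ### Reindexing the family -/

/-- The indices: which copy of `U_q(sl₂)` (`true` for `K`), and the exponents of the torus
generator, of `E` and of `F`. -/
abbrev Idx : Type := Bool × ℤ × ℕ × ℕ

/-- The torus part of a PBW monomial: `torus K K̄ z` or `torus L L̄ z`. -/
def tor (q : ℂ) : Bool → ℤ → Unorm q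
  | true, z => torus (nK q) (nKb q) z
  | false, z => torus (nL q) (nLb q) z

/-- The PBW monomials indexed by `Idx`. -/
def pbw (q : ℂ) (i : Idx) : Unorm q := tor q i.1 i.2.1 * nE q ^ i.2.2.1 * nF q ^ i.2.2.2

/-- The reindexing of `normMono` by `Idx`. -/
def toIdx : (ℕ × ℕ × ℕ) ⊕ (ℕ × ℕ × ℕ) ⊕ (ℕ × ℕ × ℕ) ⊕ (ℕ × ℕ × ℕ) → Idx
  | .inl (i, j, k) => (true, Int.ofNat i, j, k)
  | .inr (.inl (i, j, k)) => (true, Int.negSucc i, j, k)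
  | .inr (.inr (.inl (i, j, k))) => (false, Int.ofNat i, j, k)
  | .inr (.inr (.inr (i, j, k))) => (false, Int.negSucc i, j, k)

lemma toIdx_bijective : Function.Bijective toIdx := by
  constructor
  · rintro (⟨i, j, k⟩ | ⟨i, j, k⟩ | ⟨i, j, k⟩ | ⟨i, j, k⟩)
      (⟨i', j', k'⟩ | ⟨i', j', k'⟩ | ⟨i', j', k'⟩ | ⟨i', j', k'⟩) h <;>
      simp [toIdx] at h ⊢ <;> exact h
  · rintro ⟨_ | _, i | i, j, k⟩
    · exact ⟨.inr (.inr (.inl (i, j, k))), rfl⟩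
    · exact ⟨.inr (.inr (.inr (i, j, k))), rfl⟩
    · exact ⟨.inl (i, j, k), rfl⟩
    · exact ⟨.inr (.inl (i, j, k)), rfl⟩

lemma normMono_eq (q : ℂ) : normMono q = pbw q ∘ toIdx := by
  funext i
  rcases i with ⟨i, j, k⟩ | ⟨i, j, k⟩ | ⟨i, j, k⟩ | ⟨i, j, k⟩ <;> rfl

/-! ### Spanning -/

/-- The span of the PBW monomials. -/
def pbwSpan (q : ℂ) : Submodule ℂ (Unorm q) := Submodule.span ℂ (Set.range (pbw q))

lemma pbw_mem (q : ℂ) (i : Idx) : pbw q i ∈ pbwSpan q := Submodule.subset_span ⟨i, rfl⟩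

lemma stable_of_pbw {q : ℂ} {a : Unorm q} (h : ∀ i, a * pbw q i ∈ pbwSpan q) :
    ∀ m ∈ pbwSpan q, a * m ∈ pbwSpan q := by
  intro m hm
  have : pbwSpan q ≤ (pbwSpan q).comap (LinearMap.mulLeft ℂ a) := by
    refine Submodule.span_le.2 ?_
    rintro _ ⟨i, rfl⟩
    exact h i
  exact this hm

lemma torus_mul_mem {q : ℂ} {a : Unorm q}
    (h : ∀ s z, a * tor q s z = 0 ∨ ∃ w, a * tor q s z = tor q s w) :
    ∀ m ∈ pbwSpan q, a * m ∈ pbwSpan q := by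
  refine stable_of_pbw ?_
  rintro ⟨s, z, j, k⟩
  change a * (tor q s z * nE q ^ j * nF q ^ k) ∈ _
  rw [← mul_assoc, ← mul_assoc]
  rcases h s z with h | ⟨w, h⟩
  · simp [h]
  · rw [h]
    exact pbw_mem q (s, w, j, k)

lemma K_mul_mem (q : ℂ) : ∀ m ∈ pbwSpan q, nK q * m ∈ pbwSpan q := by
  refine torus_mul_mem ?_
  rintro (_ | _) z
  · exact .inl (mul_torus_eq_zero (u_kkk q) (u_kbk q) (u_kc q) (u_lbl q) (u_lc q)
      (u_pq q) z).1
  · exact .inr ⟨_, mul_torus (u_kbk q) (u_kc q) z⟩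

lemma Kb_mul_mem (q : ℂ) : ∀ m ∈ pbwSpan q, nKb q * m ∈ pbwSpan q := by
  refine torus_mul_mem ?_
  rintro (_ | _) z
  · exact .inl (mul_torus_eq_zero (u_kkk q) (u_kbk q) (u_kc q) (u_lbl q) (u_lc q)
      (u_pq q) z).2
  · exact .inr ⟨_, mul_torus' (u_kbk q) (u_kc q) z⟩

lemma L_mul_mem (q : ℂ) : ∀ m ∈ pbwSpan q, nL q * m ∈ pbwSpan q := by
  refine torus_mul_mem ?_
  rintro (_ | _) z
  · exact .inr ⟨_, mul_torus (u_lbl q) (u_lc q) z⟩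
  · exact .inl (mul_torus_eq_zero (u_lll q) (u_lbl q) (u_lc q) (u_kbk q) (u_kc q)
      (by rw [add_comm, u_pq]) z).1

lemma Lb_mul_mem (q : ℂ) : ∀ m ∈ pbwSpan q, nLb q * m ∈ pbwSpan q := by
  refine torus_mul_mem ?_
  rintro (_ | _) z
  · exact .inr ⟨_, mul_torus' (u_lbl q) (u_lc q) z⟩
  · exact .inl (mul_torus_eq_zero (u_lll q) (u_lbl q) (u_lc q) (u_kbk q) (u_kc q)
      (by rw [add_comm, u_pq]) z).2

lemma E_tor {q : ℂ} (hq : q ≠ 0) (s : Bool) (z : ℤ) : QComm (nE q) (tor q s z) := by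
  cases s
  · exact QComm.torus (u_le q hq).symm (u_lbe q hq).symm z
  · exact QComm.torus (u_ke q hq).symm (u_kbe q hq).symm z

lemma F_tor {q : ℂ} (hq : q ≠ 0) (s : Bool) (z : ℤ) : QComm (nF q) (tor q s z) := by
  cases s
  · exact QComm.torus (u_lf q hq).symm (u_lbf q hq).symm z
  · exact QComm.torus (u_kf q hq).symm (u_kbf q hq).symm z

lemma E_mul_pbw {q : ℂ} (hq : q ≠ 0) (s : Bool) (z : ℤ) (j k : ℕ) :
    ∃ c : ℂ, c ≠ 0 ∧ nE q * pbw q (s, z, j, k) = c • pbw q (s, z, j + 1, k) := by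
  obtain ⟨c, hc, h⟩ := E_tor hq s z
  refine ⟨c, hc, ?_⟩
  change nE q * (tor q s z * nE q ^ j * nF q ^ k) = c • (tor q s z * nE q ^ (j + 1) * nF q ^ k)
  rw [← mul_assoc, ← mul_assoc, h, pow_succ']
  simp only [smul_mul_assoc, mul_assoc]

lemma E_mul_mem {q : ℂ} (hq : q ≠ 0) : ∀ m ∈ pbwSpan q, nE q * m ∈ pbwSpan q := by
  refine stable_of_pbw ?_
  rintro ⟨s, z, j, k⟩
  obtain ⟨c, -, h⟩ := E_mul_pbw hq s z j k
  rw [h]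
  exact Submodule.smul_mem _ _ (pbw_mem q _)

lemma F_mul_pbw_mem {q : ℂ} (hq : q ≠ 0) (s : Bool) (z : ℤ) (j k : ℕ) :
    nF q * pbw q (s, z, j, k) ∈ pbwSpan q := by
  induction j with
  | zero =>
    obtain ⟨c, -, h⟩ := F_tor hq s z
    have : nF q * pbw q (s, z, 0, k) = c • pbw q (s, z, 0, k + 1) := by
      change nF q * (tor q s z * nE q ^ 0 * nF q ^ k) =
        c • (tor q s z * nE q ^ 0 * nF q ^ (k + 1))
      rw [pow_zero, mul_one, ← mul_assoc, h, pow_succ', smul_mul_assoc, mul_assoc]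
    rw [this]
    exact Submodule.smul_mem _ _ (pbw_mem q _)
  | succ j ih =>
    obtain ⟨c, hc, h⟩ := E_mul_pbw hq s z j k
    have h' : pbw q (s, z, j + 1, k) = c⁻¹ • (nE q * pbw q (s, z, j, k)) := by
      rw [h, smul_smul, inv_mul_cancel₀ hc, one_smul]
    have hm := pbw_mem q (s, z, j, k)
    have hfe : nF q * nE q = nE q * nF q -
        (q - q⁻¹)⁻¹ • ((nK q + nL q) - (nKb q + nLb q)) := by
      rw [← u_ef, sub_sub_cancel]
    rw [h', mul_smul_comm, ← mul_assoc, hfe, sub_mul, smul_mul_assoc, sub_mul, add_mul, add_mul,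
      mul_assoc]
    refine Submodule.smul_mem _ _ (Submodule.sub_mem _ (E_mul_mem hq _ ih)
      (Submodule.smul_mem _ _ (Submodule.sub_mem _ (Submodule.add_mem _ ?_ ?_)
        (Submodule.add_mem _ ?_ ?_))))
    · exact K_mul_mem q _ hm
    · exact L_mul_mem q _ hm
    · exact Kb_mul_mem q _ hm
    · exact Lb_mul_mem q _ hm

lemma mk_mul_mem {q : ℂ} (hq : q ≠ 0) (a : FA6) :
    ∀ m ∈ pbwSpan q, RingQuot.mkAlgHom ℂ (relNorm q) a * m ∈ pbwSpan q := by
  induction a using FreeAlgebra.induction with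
  | grade0 r =>
    intro m hm
    rw [AlgHom.commutes, ← Algebra.smul_def]
    exact Submodule.smul_mem _ _ hm
  | grade1 g =>
    cases g
    · exact K_mul_mem q
    · exact Kb_mul_mem q
    · exact L_mul_mem q
    · exact Lb_mul_mem q
    · exact E_mul_mem hq
    · exact stable_of_pbw fun i => F_mul_pbw_mem hq i.1 i.2.1 i.2.2.1 i.2.2.2
  | mul a b ha hb =>
    intro m hm
    rw [map_mul, mul_assoc]
    exact ha _ (hb _ hm)
  | add a b ha hb =>
    intro m hm
    rw [map_add, add_mul]
    exact Submodule.add_mem _ (ha _ hm) (hb _ hm)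

lemma one_mem_pbwSpan (q : ℂ) : (1 : Unorm q) ∈ pbwSpan q := by
  have h1 : (1 : Unorm q) = pbw q (true, 0, 0, 0) + pbw q (false, 0, 0, 0) := by
    change _ = nK q * nKb q * nK q ^ 0 * nE q ^ 0 * nF q ^ 0 +
      nL q * nLb q * nL q ^ 0 * nE q ^ 0 * nF q ^ 0
    simp [u_pq]
  rw [h1]
  exact Submodule.add_mem _ (pbw_mem q _) (pbw_mem q _)

lemma pbwSpan_eq_top {q : ℂ} (hq : q ≠ 0) : pbwSpan q = ⊤ := by
  refine eq_top_iff.2 fun u _ => ?_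
  obtain ⟨a, rfl⟩ := RingQuot.mkAlgHom_surjective ℂ (relNorm q) u
  simpa using mk_mul_mem hq a 1 (one_mem_pbwSpan q)

/-! ### The left regular representation -/

/-- The free module carrying the representation. -/
abbrev Reg : Type := Idx →₀ ℂ

/-- The basis vectors of `Reg`. -/
def bv (s : Bool) (z : ℤ) (j k : ℕ) : Reg := Finsupp.single (s, z, j, k) 1

/-- The linear endomorphism of `Reg` with prescribed values on the basis vectors. -/
def opOf (f : Bool → ℤ → ℕ → ℕ → Reg) : Module.End ℂ Reg :=
  Finsupp.linearCombination ℂ fun i : Idx => f i.1 i.2.1 i.2.2.1 i.2.2.2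

lemma opOf_bv (f : Bool → ℤ → ℕ → ℕ → Reg) (s : Bool) (z : ℤ) (j k : ℕ) :
    opOf f (bv s z j k) = f s z j k := by
  simp [opOf, bv]

lemma end_ext {f g : Module.End ℂ Reg} (h : ∀ s z j k, f (bv s z j k) = g (bv s z j k)) :
    f = g := by
  refine Finsupp.lhom_ext' fun i => LinearMap.ext_ring ?_
  exact h i.1 i.2.1 i.2.2.1 i.2.2.2

/-- Shift by `d` of the torus exponent in copy `t`, zero on the other copy. -/
def opT (t : Bool) (d : ℤ) : Module.End ℂ Reg :=
  opOf fun s z j k => if s = t then bv s (z + d) j k else 0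

/-- Left multiplication by `E`. -/
def opE (q : ℂ) : Module.End ℂ Reg :=
  opOf fun s z j k => (q ^ 2) ^ (-z) • bv s z (j + 1) k

/-- `1 + r + ⋯ + r ^ (j - 1)`. -/
def geom (r : ℂ) : ℕ → ℂ
  | 0 => 0
  | j + 1 => 1 + r * geom r j

/-- Left multiplication by `F`. At `j = 0` the coefficients of the terms with exponent `j - 1`
vanish. -/
def opF (q : ℂ) : Module.End ℂ Reg :=
  opOf fun s z j k => (q ^ 2) ^ z • (bv s z j (k + 1) - (q - q⁻¹)⁻¹ •
    (geom (q ^ 2)⁻¹ j • bv s (z + 1) (j - 1) k - geom (q ^ 2) j • bv s (z - 1) (j - 1) k))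

lemma opT_bv (t : Bool) (d : ℤ) (s : Bool) (z : ℤ) (j k : ℕ) :
    opT t d (bv s z j k) = if s = t then bv s (z + d) j k else 0 := opOf_bv _ _ _ _ _

lemma opE_bv (q : ℂ) (s : Bool) (z : ℤ) (j k : ℕ) :
    opE q (bv s z j k) = (q ^ 2) ^ (-z) • bv s z (j + 1) k := opOf_bv _ _ _ _ _

lemma opF_bv (q : ℂ) (s : Bool) (z : ℤ) (j k : ℕ) :
    opF q (bv s z j k) = (q ^ 2) ^ z • (bv s z j (k + 1) - (q - q⁻¹)⁻¹ •
      (geom (q ^ 2)⁻¹ j • bv s (z + 1) (j - 1) k - geom (q ^ 2) j • bv s (z - 1) (j - 1) k)) :=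
  opOf_bv _ _ _ _ _

lemma opT_mul_opE {q : ℂ} (hq : q ≠ 0) (t : Bool) (d : ℤ) :
    opT t d * opE q = (q ^ 2) ^ d • (opE q * opT t d) := by
  have h2 : q ^ 2 ≠ 0 := pow_ne_zero 2 hq
  refine end_ext fun s z j k => ?_
  by_cases h : s = t
  · simp only [Module.End.mul_apply, LinearMap.smul_apply, opE_bv, opT_bv, map_smul, h, if_true,
      smul_smul, ← zpow_add₀ h2]
    congr 2
    ring
  · simp [opE_bv, opT_bv, h]

lemma opT_mul_opF {q : ℂ} (hq : q ≠ 0) (t : Bool) (d : ℤ) :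
    opT t d * opF q = (q ^ 2) ^ (-d) • (opF q * opT t d) := by
  have h2 : q ^ 2 ≠ 0 := pow_ne_zero 2 hq
  refine end_ext fun s z j k => ?_
  by_cases h : s = t
  · simp only [Module.End.mul_apply, LinearMap.smul_apply, opF_bv, opT_bv, map_smul, map_sub, h,
      if_true]
    rw [smul_smul, ← zpow_add₀ h2, show -d + (z + d) = z by ring, show z + 1 + d = z + d + 1 by ring,
      show z - 1 + d = z + d - 1 by ring]
  · simp [opF_bv, opT_bv, h]

lemma opT_mul_opT (t : Bool) (d d' : ℤ) : opT t d * opT t d' = opT t (d + d') := by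
  refine end_ext fun s z j k => ?_
  by_cases h : s = t
  · simp only [Module.End.mul_apply, opT_bv, h, if_true]
    congr 1
    ring
  · simp [opT_bv, h]

lemma opT_zero_add : opT true 0 + opT false 0 = 1 := by
  refine end_ext fun s z j k => ?_
  cases s <;> simp [opT_bv]

lemma opE_opF {q : ℂ} (hq : q ≠ 0) : opE q * opF q - opF q * opE q =
    (q - q⁻¹)⁻¹ • ((opT true 1 + opT false 1) - (opT true (-1) + opT false (-1))) := by
  have h2 : q ^ 2 ≠ 0 := pow_ne_zero 2 hq
  refine end_ext fun s z j k => ?_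
  have hT : ((opT true 1 + opT false 1) - (opT true (-1) + opT false (-1))) (bv s z j k)
      = bv s (z + 1) j k - bv s (z - 1) j k := by
    cases s <;> simp [opT_bv, sub_eq_add_neg]
  rw [LinearMap.smul_apply, hT]
  simp only [LinearMap.sub_apply, Module.End.mul_apply, opE_bv, opF_bv, map_smul, map_sub]
  have e1 : (q ^ 2) ^ z * (q ^ 2) ^ (-z) = 1 := by
    rw [← zpow_add₀ h2]; simp
  have e2 : (q ^ 2) ^ z * (q ^ 2) ^ (-(z + 1)) = (q ^ 2)⁻¹ := by
    rw [← zpow_add₀ h2, ← zpow_neg_one]; congr 1; ring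
  have e3 : (q ^ 2) ^ z * (q ^ 2) ^ (-(z - 1)) = q ^ 2 := by
    rw [← zpow_add₀ h2]
    conv_rhs => rw [← zpow_one (q ^ 2)]
    congr 1; ring
  -- For `j = 0` the lowered terms carry the coefficient `0`, so `j - 1 + 1` may be read as `j`.
  have low : ∀ (r : ℂ) (w : ℤ), geom r j • bv s w (j - 1 + 1) k = geom r j • bv s w j k := by
    intro r w
    rcases j with _ | j
    · simp [geom]
    · simp
  have low' : ∀ (r a : ℂ) (w : ℤ), geom r j • a • bv s w (j - 1 + 1) k =
      geom r j • a • bv s w j k := by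
    intro r a w
    rw [smul_comm, low, smul_comm]
  rw [low', low', Nat.add_sub_cancel, geom, geom]
  generalize bv s z (j + 1) (k + 1) = A
  generalize bv s (z + 1) j k = B
  generalize bv s (z - 1) j k = C
  generalize (q - q⁻¹)⁻¹ = c at *
  generalize geom (q ^ 2)⁻¹ j = a at *
  generalize geom (q ^ 2) j = b at *
  generalize (q ^ 2) ^ z = u at *
  generalize (q ^ 2) ^ (-z) = u' at *
  generalize (q ^ 2) ^ (-(z + 1)) = v at *
  generalize (q ^ 2) ^ (-(z - 1)) = w at *
  rw [← e2, ← e3]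
  match_scalars
  · ring
  · linear_combination (c + c * a * u * v) * e1
  · linear_combination (-c - c * b * u * w) * e1

/-- The action of the generators on `Reg`. -/
def genAct (q : ℂ) : G6 → Module.End ℂ Reg
  | .K => opT true 1
  | .Kb => opT true (-1)
  | .L => opT false 1
  | .Lb => opT false (-1)
  | .E => opE q
  | .F => opF q

/-- The left regular representation, in coordinates. -/
def rep {q : ℂ} (hq : q ≠ 0) : Unorm q →ₐ[ℂ] Module.End ℂ Reg :=
  RingQuot.liftAlgHom ℂ ⟨FreeAlgebra.lift ℂ (genAct q), by
    intro a b h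
    cases h <;> simp only [XK, XKb, XL, XLb, XE, XF, map_mul, map_add, map_sub, map_smul, map_one,
      FreeAlgebra.lift_ι_apply, genAct]
    case ke => simpa using opT_mul_opE hq true 1
    case le => simpa using opT_mul_opE hq false 1
    case kbe => simpa using opT_mul_opE hq true (-1)
    case lbe => simpa using opT_mul_opE hq false (-1)
    case kf => simpa using opT_mul_opF hq true 1
    case lf => simpa using opT_mul_opF hq false 1
    case kbf => simpa using opT_mul_opF hq true (-1)
    case lbf => simpa using opT_mul_opF hq false (-1)
    case ef => exact opE_opF hq
    case pq => simpa [opT_mul_opT] using opT_zero_add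
    all_goals simp [opT_mul_opT]⟩

section Rep

variable {q : ℂ} (hq : q ≠ 0)

lemma rep_mk (g : G6) :
    rep hq (RingQuot.mkAlgHom ℂ (relNorm q) (FreeAlgebra.ι ℂ g)) = genAct q g := by
  rw [rep, RingQuot.liftAlgHom_mkAlgHom_apply, FreeAlgebra.lift_ι_apply]

lemma rep_K : rep hq (nK q) = opT true 1 := rep_mk hq .K
lemma rep_Kb : rep hq (nKb q) = opT true (-1) := rep_mk hq .Kb
lemma rep_L : rep hq (nL q) = opT false 1 := rep_mk hq .L
lemma rep_Lb : rep hq (nLb q) = opT false (-1) := rep_mk hq .Lb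
lemma rep_E : rep hq (nE q) = opE q := rep_mk hq .E
lemma rep_F : rep hq (nF q) = opF q := rep_mk hq .F

lemma opT_pow (t : Bool) (d : ℤ) (n : ℕ) : opT t d ^ (n + 1) = opT t ((n + 1 : ℕ) * d) := by
  induction n with
  | zero => simp
  | succ n ih =>
    rw [pow_succ, ih, opT_mul_opT]
    congr 1
    push_cast
    ring

lemma torus_opT (t : Bool) (z : ℤ) : torus (opT t 1) (opT t (-1)) z = opT t z := by
  rcases z with n | n
  · change opT t 1 * opT t (-1) * opT t 1 ^ n = _
    rcases n with _ | n
    · simp [opT_mul_opT]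
    · rw [opT_pow, opT_mul_opT, opT_mul_opT]
      congr 1
      simp
  · change opT t (-1) ^ (n + 1) = _
    rw [opT_pow]
    congr 1
    rw [Int.negSucc_eq]
    push_cast
    ring

lemma rep_tor (s : Bool) (z : ℤ) : rep hq (tor q s z) = opT s z := by
  rw [← torus_opT]
  cases s <;> rcases z with n | n <;>
    simp only [tor, torus, map_mul, map_pow, rep_K, rep_Kb, rep_L, rep_Lb]

lemma opF_pow_bv (s : Bool) (k : ℕ) : (opF q ^ k) (bv s 0 0 0) = bv s 0 0 k := by
  induction k with
  | zero => simp
  | succ k ih => rw [pow_succ', Module.End.mul_apply, ih, opF_bv]; simp [geom]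

lemma opE_pow_bv (s : Bool) (j k : ℕ) : (opE q ^ j) (bv s 0 0 k) = bv s 0 j k := by
  induction j with
  | zero => simp
  | succ j ih => rw [pow_succ', Module.End.mul_apply, ih, opE_bv]; simp

/-- Each PBW monomial sends the sum of the two vacuum vectors to its own basis vector. -/
lemma pbw_apply (i : Idx) :
    rep hq (pbw q i) (bv true 0 0 0 + bv false 0 0 0) = Finsupp.single i 1 := by
  obtain ⟨s, z, j, k⟩ := i
  rw [pbw, map_mul, map_mul, map_pow, map_pow, rep_tor, rep_E, rep_F, Module.End.mul_apply,
    Module.End.mul_apply, map_add, opF_pow_bv, opF_pow_bv, map_add, opE_pow_bv, opE_pow_bv, map_add,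
    opT_bv, opT_bv]
  cases s <;> simp [bv]

lemma pbw_linearIndependent {q : ℂ} (hq : q ≠ 0) : LinearIndependent ℂ (pbw q) := by
  let φ : Unorm q →ₗ[ℂ] Reg :=
    (LinearMap.applyₗ (bv true 0 0 0 + bv false 0 0 0)).comp (rep hq).toLinearMap
  refine LinearIndependent.of_comp φ ?_
  have : φ ∘ pbw q = fun i => Finsupp.single i (1 : ℂ) := funext fun i => pbw_apply hq i
  rw [this]
  exact Finsupp.linearIndependent_single_one ℂ Idx

end Rep

/-- The family `{P Kⁱ Eʲ Fᵏ : i,j,k ≥ 0} ∪ {K̄ⁱ Eʲ Fᵏ : i ≥ 1, j,k ≥ 0} ∪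
{Q Lⁱ Eʲ Fᵏ : i,j,k ≥ 0} ∪ {L̄ⁱ Eʲ Fᵏ : i ≥ 1, j,k ≥ 0}` is a basis of
`U_{K,L,norm}` over `ℂ`. -/
theorem statement8 (q : ℂ) (hq0 : q ≠ 0) (hq1 : q ≠ 1) (hqm1 : q ≠ -1) :
    LinearIndependent ℂ (normMono q) ∧
    Submodule.span ℂ (Set.range (normMono q)) = ⊤ := by
  rw [normMono_eq]
  refine ⟨(pbw_linearIndependent hq0).comp _ toIdx_bijective.injective, ?_⟩
  rw [toIdx_bijective.surjective.range_comp]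
  exact pbwSpan_eq_top hq0
end
end

section
/- For every unital ℂ-algebra homomorphism ε : H(1,K,K̄,L,L̄) → ℂ, either ε(P) = 1 and ε(Q) = 0, or ε(P) = 0 and ε(Q) = 1; moreover, if ε(P) = 1 then ε(L) = ε(L̄) = 0 and ε(K)·ε(K̄) = 1. -/
/-!
Applying `ε` to the relation `K K̄ K = K` shows that `ε(P)` is an idempotent of the field `ℂ`,
hence `0` or `1`, and `P + Q = 1` then fixes `ε(Q)`. If `ε(P) = 1` then `ε(L) ε(L̄) = ε(Q) = 0`,
so `L = L L̄ L` and `L̄ = L̄ L L̄` are sent to `0`.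
-/

noncomputable section

open MvPolynomial

/-- The ideal of relations of `H(1,K,K̄,L,L̄)` inside `ℂ[K,K̄,L,L̄]`,
variables: `0 ↦ K`, `1 ↦ K̄`, `2 ↦ L`, `3 ↦ L̄`. -/
def relH : Ideal (MvPolynomial (Fin 4) ℂ) := Ideal.span
  {X 0 * X 1 * X 0 - X 0, X 1 * X 0 * X 1 - X 1,
   X 2 * X 3 * X 2 - X 2, X 3 * X 2 * X 3 - X 3,
   X 0 * X 1 + X 2 * X 3 - 1}

/-- The commutative unital algebra `H(1,K,K̄,L,L̄)`. -/
abbrev Halg : Type := MvPolynomial (Fin 4) ℂ ⧸ relH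

def hK : Halg := Ideal.Quotient.mk relH (X 0)
def hKb : Halg := Ideal.Quotient.mk relH (X 1)
def hL : Halg := Ideal.Quotient.mk relH (X 2)
def hLb : Halg := Ideal.Quotient.mk relH (X 3)
def hP : Halg := hK * hKb
def hQ : Halg := hL * hLb


theorem hK_mul_hKb_mul_hK : hK * hKb * hK = hK :=
  Ideal.Quotient.eq.2 (Ideal.subset_span (by simp))

theorem hL_mul_hLb_mul_hL : hL * hLb * hL = hL :=
  Ideal.Quotient.eq.2 (Ideal.subset_span (by simp))

theorem hLb_mul_hL_mul_hLb : hLb * hL * hLb = hLb :=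
  Ideal.Quotient.eq.2 (Ideal.subset_span (by simp))

theorem hP_add_hQ : hP + hQ = 1 :=
  Ideal.Quotient.eq.2 (Ideal.subset_span (by simp))

/-- For every unital algebra homomorphism `ε : H(1,K,K̄,L,L̄) → ℂ`, either
`ε(P) = 1, ε(Q) = 0` or `ε(P) = 0, ε(Q) = 1`; and if `ε(P) = 1` then
`ε(L) = ε(L̄) = 0` and `ε(K)·ε(K̄) = 1`. -/
theorem statement11 (ε : Halg →ₐ[ℂ] ℂ) :
    ((ε hP = 1 ∧ ε hQ = 0) ∨ (ε hP = 0 ∧ ε hQ = 1)) ∧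
    (ε hP = 1 → ε hL = 0 ∧ ε hLb = 0 ∧ ε hK * ε hKb = 1) := by
  have hk := congrArg ε hK_mul_hKb_mul_hK
  have hl := congrArg ε hL_mul_hLb_mul_hL
  have hlb := congrArg ε hLb_mul_hL_mul_hLb
  have hs := congrArg ε hP_add_hQ
  simp only [hP, hQ, map_mul, map_add, map_one] at hk hl hlb hs ⊢
  generalize ε hK = k at *
  generalize ε hKb = kb at *
  generalize ε hL = l at *
  generalize ε hLb = lb at *
  refine ⟨?_, fun h => ?_⟩
  · have hz : k * kb * (k * kb - 1) = 0 := by linear_combination kb * hk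
    rcases mul_eq_zero.1 hz with h | h
    · exact Or.inr ⟨h, by linear_combination hs - h⟩
    · exact Or.inl ⟨by linear_combination h, by linear_combination hs - h⟩
  · have hq : l * lb = 0 := by linear_combination hs - h
    exact ⟨by linear_combination l * hq - hl, by linear_combination lb * hq - hlb, h⟩
end
end

section
/- In U_{K,L,norm} one has P ≠ 0, Q ≠ 0, and P Q = 0; in particular the idempotent P is a zero divisor and is not invertible in U_{K,L,norm}. -/
/-!
`P` is idempotent because `K K̄ K = K`, and `Q = 1 - P`, so `P Q = P - P² = 0`.
Nonvanishing of `P` and `Q` is detected by the two characters of `U_{K,L,norm}` that kill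
`E` and `F` and send `(K, K̄, L, L̄)` to `(1, 1, 0, 0)` and `(0, 0, 1, 1)` (`exists_char`).
A unit `P` would give `Q = 0` by cancellation in `P Q = 0`.
-/

noncomputable section

/-- The values of the character of `U_{K,L,norm}` with `K = K̄ = k`, `L = L̄ = l`, `E = F = 0`. -/
def charVal (k l : ℂ) : G6 → ℂ
  | .K => k
  | .Kb => k
  | .L => l
  | .Lb => l
  | .E => 0
  | .F => 0

/-- If `k`, `l` are complementary idempotents of `ℂ`, the assignment `charVal k l` respects all
defining relations (both sides of the `EF` relation vanish, since `K - K̄` and `L - L̄` map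
to `0`), so it descends to a character of `U_{K,L,norm}`. -/
theorem exists_char (q k l : ℂ) (hk : k * k = k) (hl : l * l = l) (hkl : k + l = 1) :
    ∃ φ : Unorm q →ₐ[ℂ] ℂ, φ (nP q) = k ∧ φ (nQ q) = l := by
  have h : ∀ ⦃x y : FA6⦄, relNorm q x y →
      FreeAlgebra.lift ℂ (charVal k l) x = FreeAlgebra.lift ℂ (charVal k l) y := by
    intro x y hxy
    cases hxy <;>
      simp [XK, XKb, XL, XLb, XE, XF, charVal, hk, hl, hkl]
  refine ⟨RingQuot.liftAlgHom ℂ ⟨FreeAlgebra.lift ℂ (charVal k l), h⟩, ?_, ?_⟩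
  · simp [nP, nK, nKb, XK, XKb, charVal, hk]
  · simp [nQ, nL, nLb, XL, XLb, charVal, hl]

theorem nP_add_nQ (q : ℂ) : nP q + nQ q = 1 := by
  have h := RingQuot.mkAlgHom_rel ℂ (relNorm.pq (q := q))
  simpa only [nP, nQ, nK, nKb, nL, nLb, map_add, map_mul, map_one] using h

theorem nP_mul_nP (q : ℂ) : nP q * nP q = nP q := by
  have h : nK q * nKb q * nK q = nK q := by
    have h := RingQuot.mkAlgHom_rel ℂ (relNorm.kkk (q := q))
    simpa only [nK, nKb, map_mul] using h
  unfold nP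
  rw [← mul_assoc, h]

theorem test (q : ℂ) (hq0 : q ≠ 0) (hq1 : q ≠ 1) (hqm1 : q ≠ -1) :
    nP q ≠ 0 ∧ nQ q ≠ 0 ∧ nP q * nQ q = 0 ∧ ¬ IsUnit (nP q) := by
  have hPQ : nP q * nQ q = 0 := by
    rw [eq_sub_of_add_eq' (nP_add_nQ q), mul_sub, mul_one, nP_mul_nP, sub_self]
  have hP : nP q ≠ 0 := by
    obtain ⟨φ, h, -⟩ := exists_char q 1 0 (by simp) (by simp) (by simp)
    intro h0
    simp [h0] at h
  have hQ : nQ q ≠ 0 := by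
    obtain ⟨φ, -, h⟩ := exists_char q 0 1 (by simp) (by simp) (by simp)
    intro h0
    simp [h0] at h
  exact ⟨hP, hQ, hPQ, fun hu => hQ (hu.mul_right_eq_zero.mp hPQ)⟩
end
end
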